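/- Satisfiable regime of random geometric k-SAT: fix integers d ≥ 1 and k ≥ 2. If 0 < γ < 2^{-(1+1/d)}, then the probability that the random formula F_k(n,γ) is satisfiable tends to 1 as n → ∞. -/

import Mathlib

/-!
The proof is a first moment computation. For `k ≥ 2` every clause contains a clause of the random
geometric 2-CNF with the same radius `r`, so it is enough that this 2-CNF is satisfiable.

If a 2-CNF is unsatisfiable, some literal `x` satisfies `x → ... → ¬x → ... → x` in the
implication graph (`exists_assignment`), and from such a closed walk one extracts a *bicycle*
(`exists_bicycle`): literals `w₀, ..., w_s` on distinct variables with clauses `¬wᵢ ∨ wᵢ₊₁`,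
together with two clauses `w₀ ∨ u` and `¬w_s ∨ v`, where `u` and `v` are on variables of the path.
Moreover `v` is the negation of a `wᵢ`, hence `v ≠ w₀`, which makes the `s + 2` clauses,
seen as edges between literals, a forest: the clauses `¬wᵢ ∨ wᵢ₊₁` form a matching avoiding `w₀`
and `¬w_s`, and the two other clauses attach these literals as leaves.

Two literals are within distance `r` with probability at most `p = (2 r) ^ d`, even given the
position of one of them. Removing leaves one at a time, the edges of a forest are all present
with probability at most `p` to the number of edges (`placementMeasure_closeSet_le`). There are
at most `(2 n) ^ (s + 1) * 2 * (s + 1) ^ 2` bicycles with `s + 1` path literals. Since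
`p = c / (2 n)` with `c = 2 * (2 γ) ^ d`, the expected number of bicycles is `O(1 / n)` as soon as
`c < 1`, which is the hypothesis on `γ`.
-/

open MeasureTheory Filter

/-- The uniform (Lebesgue) measure on the unit cube `[0,1]^d`. -/
noncomputable def unitCubeMeasure (d : ℕ) : Measure (Fin d → ℝ) :=
  volume.restrict (Set.Icc 0 1)

instance (d : ℕ) : SigmaFinite (unitCubeMeasure d) := by
  unfold unitCubeMeasure; infer_instance

/-- The distribution of a placement of the `2n` literals (pairs `(v,s)` with `v` a variable
and `s` a sign) at independent uniform points of the cube `[0,1]^d`. -/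
noncomputable def placementMeasure (d n : ℕ) : Measure ((Fin n × Bool) → (Fin d → ℝ)) :=
  Measure.pi fun _ => unitCubeMeasure d

/-- The geometric `k`-SAT formula determined by the placement `ω` (with radius `r` in the
`ℓ∞` distance) is satisfiable. -/
def GeomSatisfiable (d k n : ℕ) (r : ℝ) (ω : (Fin n × Bool) → (Fin d → ℝ)) : Prop :=
  ∃ α : Fin n → Bool, ∀ S : Finset (Fin n × Bool), S.card = k →
    (∀ l₁ ∈ S, ∀ l₂ ∈ S, dist (ω l₁) (ω l₂) ≤ r) →
    ∃ l ∈ S, α l.1 = l.2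

/-! ### Unsatisfiable 2-CNFs contain bicycles -/

/-- The complementary literal. -/
def litNeg {n : ℕ} (l : Fin n × Bool) : Fin n × Bool := (l.1, !l.2)

@[simp] lemma litNeg_fst {n : ℕ} (l : Fin n × Bool) : (litNeg l).1 = l.1 := rfl

@[simp] lemma litNeg_litNeg {n : ℕ} (l : Fin n × Bool) : litNeg (litNeg l) = l := by
  simp [litNeg]

lemma litNeg_ne {n : ℕ} (l : Fin n × Bool) : litNeg l ≠ l := by
  intro h
  have := congrArg Prod.snd h
  simp [litNeg] at this

lemma fst_eq_of_litNeg_eq {n : ℕ} {a b : Fin n × Bool} (h : litNeg a = b) : a.1 = b.1 := by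
  rw [← h, litNeg_fst]

lemma eq_or_eq_litNeg {n : ℕ} {a b : Fin n × Bool} (h : a.1 = b.1) : a = b ∨ a = litNeg b := by
  obtain ⟨a, s⟩ := a
  obtain ⟨b, t⟩ := b
  simp only at h
  subst h
  cases s <;> cases t <;> simp [litNeg]

/-- The implication `a → b` between literals: for a 2-CNF whose clauses are the pairs related
by `E`, it holds when `¬a ∨ b` is a clause. -/
def Imp {n : ℕ} (E : Fin n × Bool → Fin n × Bool → Prop) (a b : Fin n × Bool) : Prop :=
  E (litNeg a) b

lemma Imp.contra {n : ℕ} {E : Fin n × Bool → Fin n × Bool → Prop}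
    (hE : ∀ a b, E a b → E b a) {a b : Fin n × Bool} (h : Imp E a b) :
    Imp E (litNeg b) (litNeg a) := by
  simpa [Imp] using hE _ _ h

lemma imp_star_contra {n : ℕ} {E : Fin n × Bool → Fin n × Bool → Prop}
    (hE : ∀ a b, E a b → E b a) {a b : Fin n × Bool} (h : Relation.ReflTransGen (Imp E) a b) :
    Relation.ReflTransGen (Imp E) (litNeg b) (litNeg a) := by
  induction h with
  | refl => exact .refl
  | tail _ h ih => exact .head (h.contra hE) ih

/-- The 2-SAT criterion: a 2-CNF is satisfiable if no variable is equivalent to its negation in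
the implication graph. The assignment is a maximal consistent set of literals closed under
implication. -/
lemma exists_assignment {n : ℕ} {E : Fin n × Bool → Fin n × Bool → Prop}
    (hE : ∀ a b, E a b → E b a)
    (h : ∀ x, Relation.ReflTransGen (Imp E) x (litNeg x) →
      ¬ Relation.ReflTransGen (Imp E) (litNeg x) x) :
    ∃ α : Fin n → Bool, ∀ a b, E a b → α a.1 = a.2 ∨ α b.1 = b.2 := by
  classical
  let P : Set (Fin n × Bool) → Prop := fun T =>
    (∀ a ∈ T, ∀ b, Relation.ReflTransGen (Imp E) a b → b ∈ T) ∧ ∀ a ∈ T, litNeg a ∉ T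
  obtain ⟨T, hT⟩ : ∃ T, Maximal P T := by
    have : {T | P T}.Finite := Set.toFinite _
    exact this.exists_maximal ⟨∅, by simp [P]⟩
  have hcl := hT.prop.1
  have hcons := hT.prop.2
  have key : ∀ y, ¬ Relation.ReflTransGen (Imp E) y (litNeg y) → y ∈ T ∨ litNeg y ∈ T := by
    intro y hy
    by_contra! hc
    have hP : P (T ∪ {z | Relation.ReflTransGen (Imp E) y z}) := by
      refine ⟨?_, ?_⟩
      · rintro a (ha | ha) b hab
        · exact Or.inl (hcl a ha b hab)
        · exact Or.inr (Relation.ReflTransGen.trans ha hab)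
      · have aux : ∀ a ∈ T, ¬ Relation.ReflTransGen (Imp E) y (litNeg a) := by
          intro a ha hya
          have := imp_star_contra hE hya
          rw [litNeg_litNeg] at this
          exact hc.2 (hcl a ha _ this)
        rintro a (ha | ha) (hb | hb)
        · exact hcons a ha hb
        · exact aux a ha hb
        · exact aux _ hb (by simpa using ha)
        · have := imp_star_contra hE hb
          rw [litNeg_litNeg] at this
          exact hy (Relation.ReflTransGen.trans ha this)
    have := hT.le_of_ge hP Set.subset_union_left
    exact hc.1 (this (Or.inr .refl))
  have total : ∀ y, y ∈ T ∨ litNeg y ∈ T := by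
    intro y
    by_cases hy : Relation.ReflTransGen (Imp E) y (litNeg y)
    · have := key (litNeg y) (by simpa using h y hy)
      simpa [or_comm] using this
    · exact key y hy
  refine ⟨fun v => decide ((v, true) ∈ T), ?_⟩
  have val : ∀ a ∈ T, decide ((a.1, true) ∈ T) = a.2 := by
    rintro ⟨v, s⟩ ha
    cases s
    · simpa [litNeg] using hcons _ ha
    · simpa using ha
  intro a b hab
  rcases total a with ha | ha
  · exact Or.inl (val a ha)
  · refine Or.inr (val b (hcl _ ha b (.single ?_)))
    simpa [Imp] using hab

/-- A walk from `x` to `¬x` in the implication graph contains a lasso: an implication path from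
`x` through distinct variables whose last literal implies the negation of a literal of the path. -/
lemma exists_lasso {n : ℕ} {E : Fin n × Bool → Fin n × Bool → Prop} {x : Fin n × Bool}
    (h : Relation.ReflTransGen (Imp E) x (litNeg x)) :
    ∃ (L : List (Fin n × Bool)) (y z : Fin n × Bool), L.head? = some x ∧ L.getLast? = some y ∧
      L.IsChain (Imp E) ∧ (L.map Prod.fst).Nodup ∧ Imp E y z ∧ litNeg z ∈ L := by
  by_contra hno
  have key : ∀ y, Relation.ReflTransGen (Imp E) x y → ∃ L : List (Fin n × Bool),
      L.head? = some x ∧ L.getLast? = some y ∧ L.IsChain (Imp E) ∧ (L.map Prod.fst).Nodup := by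
    intro y hy
    induction hy with
    | refl => exact ⟨[x], by simp⟩
    | @tail y z _ hyz ih =>
      obtain ⟨L, h1, h2, h3, h4⟩ := ih
      by_cases hz : z.1 ∈ L.map Prod.fst
      · obtain ⟨a, ha, haz⟩ := List.mem_map.1 hz
        rcases eq_or_eq_litNeg haz with rfl | rfl
        · -- the literal was already visited: cut the path there
          obtain ⟨L₁, L₂, rfl⟩ := List.append_of_mem ha
          refine ⟨L₁ ++ [a], ?_, by simp, ?_, ?_⟩
          · cases L₁ <;> simpa using h1
          · rw [← List.singleton_append, ← List.append_assoc] at h3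
            exact h3.left_of_append
          · rw [← List.singleton_append, ← List.append_assoc, List.map_append] at h4
            exact h4.of_append_left
        · exact absurd ⟨L, y, z, h1, h2, h3, h4, hyz, ha⟩ hno
      · refine ⟨L ++ [z], ?_, by simp, ?_, ?_⟩
        · cases L <;> simp_all
        · refine h3.append (by simp) ?_
          intro a ha b hb
          simp_all
        · rw [List.map_append, List.nodup_append]
          refine ⟨h4, by simp, ?_⟩
          intro a ha b hb hab
          simp at hb
          subst hab hb
          exact hz ha
  obtain ⟨L, h1, h2, -, h4⟩ := key _ h
  have := List.inj_on_of_nodup_map h4 (List.mem_of_getLast? h2) (List.mem_of_head? h1) rfl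
  exact litNeg_ne x this

/-- An unsatisfiable 2-CNF contains a bicycle: an implication path `w` through distinct
variables, whose last literal implies the negation `v` of a literal of `w`, and whose first
literal shares a clause with a literal `u` on a variable of `w`. -/
lemma exists_bicycle {n : ℕ} {E : Fin n × Bool → Fin n × Bool → Prop}
    (hE : ∀ a b, E a b → E b a)
    (h : ¬ ∃ α : Fin n → Bool, ∀ a b, E a b → α a.1 = a.2 ∨ α b.1 = b.2) :
    ∃ (w : List (Fin n × Bool)) (x y u v : Fin n × Bool), w.head? = some x ∧
      w.getLast? = some y ∧ w.IsChain (Imp E) ∧ (w.map Prod.fst).Nodup ∧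
      Imp E y v ∧ litNeg v ∈ w ∧ E x u ∧ u.1 ∈ w.map Prod.fst := by
  obtain ⟨x, hx1, hx2⟩ : ∃ x, Relation.ReflTransGen (Imp E) x (litNeg x) ∧
      Relation.ReflTransGen (Imp E) (litNeg x) x := by
    by_contra! hc
    exact h (exists_assignment hE hc)
  obtain ⟨L, y, v, hL1, hL2, hL3, hL4, hyv, hv⟩ := exists_lasso hx1
  by_contra hno
  -- the lasso is prolonged backwards along the contrapositive of the walk from `¬x` to `x`
  have key : ∀ z, Relation.ReflTransGen (Imp E) (litNeg x) z → ∃ w : List (Fin n × Bool),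
      w.head? = some (litNeg z) ∧ w.getLast? = some y ∧ w.IsChain (Imp E) ∧
      (w.map Prod.fst).Nodup ∧ litNeg v ∈ w ∧ x ∈ w := by
    intro z hz
    induction hz with
    | refl => exact ⟨L, by simpa using hL1, hL2, hL3, hL4, hv, List.mem_of_head? hL1⟩
    | @tail z t _ hzt ih =>
      obtain ⟨w, h1, h2, h3, h4, h5, h6⟩ := ih
      by_cases ht : t.1 ∈ w.map Prod.fst
      · exact absurd ⟨w, litNeg z, y, t, v, h1, h2, h3, h4, hyv, h5, hzt, ht⟩ hno
      · refine ⟨litNeg t :: w, rfl, ?_, ?_, ?_, by simp [h5], by simp [h6]⟩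
        · cases w <;> simp_all
        · rw [List.isChain_cons]
          refine ⟨?_, h3⟩
          intro b hb
          rw [h1] at hb
          simp at hb
          subst hb
          exact hzt.contra hE
        · rw [List.map_cons, List.nodup_cons]
          exact ⟨ht, h4⟩
  obtain ⟨w, h1, -, -, h4, -, h6⟩ := key _ hx2
  have := List.inj_on_of_nodup_map h4 (List.mem_of_head? h1) h6 rfl
  exact litNeg_ne x this

/-! ### Forests in the random geometric graph on the literals -/

lemma unitCubeMeasure_univ (d : ℕ) : unitCubeMeasure d Set.univ = 1 := by
  simp [unitCubeMeasure, Real.volume_Icc_pi]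

instance unitCubeMeasure_isProb (d : ℕ) : IsProbabilityMeasure (unitCubeMeasure d) :=
  ⟨unitCubeMeasure_univ d⟩

instance placementMeasure_isProb (d n : ℕ) : IsProbabilityMeasure (placementMeasure d n) := by
  unfold placementMeasure
  infer_instance

lemma unitCubeMeasure_closedBall_le (d : ℕ) (x : Fin d → ℝ) {r : ℝ} (hr : 0 ≤ r) :
    unitCubeMeasure d (Metric.closedBall x r) ≤ ENNReal.ofReal ((2 * r) ^ d) := by
  refine (Measure.restrict_apply_le _ _).trans ?_
  rw [Real.volume_pi_closedBall x hr, Fintype.card_fin]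

/-- The placements for which every pair of the list `L` is at distance at most `r`. -/
def closeSet (d n : ℕ) (r : ℝ) (L : List ((Fin n × Bool) × (Fin n × Bool))) :
    Set ((Fin n × Bool) → (Fin d → ℝ)) :=
  {ω | ∀ e ∈ L, dist (ω e.1) (ω e.2) ≤ r}

lemma measurableSet_closeSet (d n : ℕ) (r : ℝ) (L : List ((Fin n × Bool) × (Fin n × Bool))) :
    MeasurableSet (closeSet d n r L) := by
  induction L with
  | nil => simp [closeSet]
  | cons e L ih =>
    have : closeSet d n r (e :: L) = {ω | dist (ω e.1) (ω e.2) ≤ r} ∩ closeSet d n r L := by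
      ext ω
      simp [closeSet]
    rw [this]
    exact (measurableSet_le (by fun_prop) measurable_const).inter ih

/-- The edges of a forest occur with at most the probability they would have if they were
independent. The forest is given with its edges in an order such that the first endpoint of each
edge is a leaf once the previous edges are removed. -/
lemma placementMeasure_closeSet_le (d n : ℕ) {r : ℝ} (hr : 0 ≤ r)
    (L : List ((Fin n × Bool) × (Fin n × Bool)))
    (h1 : ∀ e ∈ L, e.1 ≠ e.2) (h2 : L.Pairwise fun e f => f.1 ≠ e.1 ∧ f.2 ≠ e.1) :
    placementMeasure d n (closeSet d n r L) ≤ ENNReal.ofReal ((2 * r) ^ d) ^ L.length := by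
  induction L with
  | nil => simpa using prob_le_one
  | cons e L ih =>
    set p := ENNReal.ofReal ((2 * r) ^ d)
    rw [List.pairwise_cons] at h2
    have ih := ih (fun f hf => h1 f (by simp [hf])) h2.2
    have he : e.2 ≠ e.1 := (h1 e (by simp)).symm
    have hinv : ∀ ω y, Function.update ω e.1 y ∈ closeSet d n r L ↔ ω ∈ closeSet d n r L := by
      intro ω y
      refine forall₂_congr fun f hf => ?_
      rw [Function.update_of_ne (h2.1 f hf).1, Function.update_of_ne (h2.1 f hf).2]
    have hm := measurableSet_closeSet d n r L
    have hm' := measurableSet_closeSet d n r (e :: L)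
    -- integrating out the leaf `e.1` alone costs a factor `p`
    have step : placementMeasure d n (closeSet d n r (e :: L)) ≤
        p * placementMeasure d n (closeSet d n r L) := by
      rw [← lintegral_indicator_one hm', ← lintegral_indicator_one hm,
        ← lintegral_const_mul _ (measurable_one.indicator hm)]
      refine lintegral_le_of_lmarginal_le {e.1} (measurable_one.indicator hm')
        ((measurable_one.indicator hm).const_mul _) ?_
      rw [lmarginal_singleton, lmarginal_singleton]
      intro ω
      simp only
      by_cases hω : ω ∈ closeSet d n r L
      · have : ∀ y, (closeSet d n r L).indicator (1 : (Fin n × Bool → Fin d → ℝ) → ENNReal) (Function.update ω e.1 y) = 1 :=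
          fun y => Set.indicator_of_mem ((hinv ω y).2 hω) _
        simp only [this, mul_one, lintegral_const, measure_univ]
        refine le_trans ?_ (unitCubeMeasure_closedBall_le d (ω e.2) hr)
        rw [← lintegral_indicator_one Metric.isClosed_closedBall.measurableSet]
        refine lintegral_mono fun y => ?_
        by_cases hy : Function.update ω e.1 y ∈ closeSet d n r (e :: L)
        · have hd := hy e (by simp)
          rw [Function.update_self, Function.update_of_ne he] at hd
          rw [Set.indicator_of_mem hy, Set.indicator_of_mem (Metric.mem_closedBall.2 hd)]
          rfl
        · rw [Set.indicator_of_notMem hy]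
          exact zero_le
      · have : ∀ y, (closeSet d n r (e :: L)).indicator (1 : (Fin n × Bool → Fin d → ℝ) → ENNReal)
            (Function.update ω e.1 y) = 0 := by
          refine fun y => Set.indicator_of_notMem (fun hc => hω ((hinv ω y).1 ?_)) _
          exact fun f hf => hc f (by simp [hf])
        simp [this]
    calc _ ≤ _ := step
      _ ≤ p * p ^ L.length := by gcongr
      _ = p ^ (e :: L).length := by rw [List.length_cons, pow_succ']

/-! ### The first moment of the number of bicycles -/

/-- The edges of the bicycle with path `f` and end literals `u`, `v`, listed so that each edge
starts at a leaf of the graph formed by it and the edges after it. -/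
def bicycleEdges {n s : ℕ} (f : Fin (s + 1) → Fin n × Bool) (u v : Fin n × Bool) :
    List ((Fin n × Bool) × (Fin n × Bool)) :=
  (f 0, u) :: (litNeg (f (Fin.last s)), v) ::
    List.ofFn fun i : Fin s => (litNeg (f i.castSucc), f i.succ)

/-- The placements `ω` in which the bicycle with path `f` and end literals `u`, `v` occurs; empty
if `f`, `u`, `v` do not form a bicycle. -/
def bicycleSet (d : ℕ) {n s : ℕ} (r : ℝ) (f : Fin (s + 1) → Fin n × Bool)
    (u v : Fin n × Bool) : Set ((Fin n × Bool) → (Fin d → ℝ)) :=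
  {ω | ω ∈ closeSet d n r (bicycleEdges f u v) ∧ (Function.Injective fun i => (f i).1) ∧
    u ≠ f 0 ∧ v ≠ f 0 ∧ v ≠ litNeg (f (Fin.last s))}

lemma placementMeasure_bicycleSet_le (d : ℕ) {n s : ℕ} {r : ℝ} (hr : 0 ≤ r)
    (f : Fin (s + 1) → Fin n × Bool) (u v : Fin n × Bool) :
    placementMeasure d n (bicycleSet d r f u v) ≤ ENNReal.ofReal ((2 * r) ^ d) ^ (s + 2) := by
  by_cases h : (Function.Injective fun i => (f i).1) ∧
    u ≠ f 0 ∧ v ≠ f 0 ∧ v ≠ litNeg (f (Fin.last s))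
  · obtain ⟨hf, hu, hv0, hv⟩ := h
    have hneg : ∀ i j, litNeg (f i) ≠ f j := by
      intro i j hij
      have := hf (fst_eq_of_litNeg_eq hij : (f i).1 = (f j).1)
      subst this
      exact litNeg_ne _ hij
    have hne : ∀ i j, i ≠ j → f i ≠ f j := fun i j hij hc => hij (hf (congrArg Prod.fst hc))
    have hnn : ∀ i j, i ≠ j → litNeg (f i) ≠ litNeg (f j) :=
      fun i j hij hc => hij (hf (by simpa using fst_eq_of_litNeg_eq hc))
    have := placementMeasure_closeSet_le d n hr (bicycleEdges f u v) ?_ ?_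
    · refine (measure_mono fun ω hω => hω.1).trans (this.trans_eq ?_)
      simp [bicycleEdges]
    · intro e he
      simp only [bicycleEdges, List.mem_cons, List.mem_ofFn] at he
      rcases he with rfl | rfl | ⟨i, rfl⟩
      · exact hu.symm
      · exact hv.symm
      · exact hneg _ _
    · simp only [bicycleEdges, List.pairwise_cons, List.mem_cons, List.pairwise_ofFn,
        List.mem_ofFn]
      refine ⟨?_, ?_, ?_⟩
      · rintro e (rfl | ⟨i, rfl⟩)
        · exact ⟨hneg _ _, hv0⟩
        · exact ⟨hneg _ _, hne _ _ (Fin.succ_ne_zero i)⟩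
      · rintro e ⟨i, rfl⟩
        exact ⟨hnn _ _ (Fin.castSucc_lt_last i).ne, (hneg _ _).symm⟩
      · intro i j hij
        refine ⟨hnn _ _ ?_, (hneg _ _).symm⟩
        simpa using hij.ne'
  · have : bicycleSet d r f u v = ∅ := by
      ext ω
      simp only [bicycleSet, Set.mem_ofPred_eq, Set.mem_empty_iff_false, iff_false]
      exact fun hc => h hc.2
    simp [this]

/-- An unsatisfiable formula contains a bicycle. For `k > 2` every clause contains a 2-clause, so
only the formula formed by the 2-clauses matters. -/
lemma unsat_subset (d k n : ℕ) (hk : 2 ≤ k) (r : ℝ) :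
    {ω | ¬ GeomSatisfiable d k n r ω} ⊆ ⋃ s ∈ Finset.range n,
      ⋃ q : (Fin (s + 1) → Fin n × Bool) × Fin (s + 1) × Bool × Fin (s + 1),
        bicycleSet d r q.1 ((q.1 q.2.1).1, q.2.2.1) (litNeg (q.1 q.2.2.2)) := by
  intro ω hω
  set E : Fin n × Bool → Fin n × Bool → Prop := fun a b => a ≠ b ∧ dist (ω a) (ω b) ≤ r with hEdef
  have hE : ∀ a b, E a b → E b a := fun a b h => ⟨h.1.symm, by rw [dist_comm]; exact h.2⟩
  have hun : ¬ ∃ α : Fin n → Bool, ∀ a b, E a b → α a.1 = a.2 ∨ α b.1 = b.2 := by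
    rintro ⟨α, hα⟩
    refine hω ⟨α, fun S hS hd => ?_⟩
    obtain ⟨a, ha, b, hb, hab⟩ := Finset.one_lt_card.1 (by omega : 1 < S.card)
    rcases hα a b ⟨hab, hd a ha b hb⟩ with h | h
    · exact ⟨a, ha, h⟩
    · exact ⟨b, hb, h⟩
  obtain ⟨w, x, y, u, v, hx, hy, hch, hnd, hyv, hv, hxu, hu⟩ := exists_bicycle hE hun
  obtain ⟨s, hs⟩ : ∃ s, w.length = s + 1 := by
    refine Nat.exists_eq_succ_of_ne_zero ?_
    rintro h
    rw [List.length_eq_zero_iff] at h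
    simp [h] at hx
  obtain ⟨f, rfl⟩ : ∃ f : Fin (s + 1) → Fin n × Bool, w = List.ofFn f :=
    ⟨fun i => w.get (i.cast hs.symm), by
      refine List.ext_getElem (by rw [List.length_ofFn, hs]) fun m h h' => ?_
      rw [List.getElem_ofFn]
      rfl⟩
  have hf : Function.Injective fun i => (f i).1 := by
    rw [List.map_ofFn, List.nodup_ofFn] at hnd
    exact hnd
  have hx : f 0 = x := by simpa [List.head?_eq_getElem?] using hx
  have hy : f (Fin.last s) = y := by
    rw [List.getLast?_eq_getElem?, List.length_ofFn, List.getElem?_ofFn] at hy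
    simpa [Fin.last] using hy
  subst hx hy
  rw [List.mem_ofFn] at hv
  obtain ⟨j, hj⟩ := hv
  obtain rfl : v = litNeg (f j) := by rw [hj, litNeg_litNeg]
  rw [List.map_ofFn, List.mem_ofFn] at hu
  obtain ⟨i, hi⟩ := hu
  have hsn : s < n := by simpa using Fintype.card_le_of_injective _ hf
  simp only [Set.mem_iUnion, Finset.mem_range]
  refine ⟨s, hsn, ⟨f, i, u.2, j⟩, ?_⟩
  have hu' : ((f i).1, u.2) = u := Prod.ext hi rfl
  simp only [hu']
  refine ⟨?_, hf, hxu.1.symm, ?_, hyv.1.symm⟩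
  · intro e he
    simp only [bicycleEdges, List.mem_cons, List.mem_ofFn] at he
    rcases he with rfl | rfl | ⟨i, rfl⟩
    · exact hxu.2
    · exact hyv.2
    · rw [List.isChain_iff_getElem] at hch
      have := hch i.1 (by simp)
      simp only [List.getElem_ofFn] at this
      exact this.2
  · -- `v` is the negation of a literal of the path, which passes through distinct variables
    intro hc
    have := hf (fst_eq_of_litNeg_eq hc : (f j).1 = (f 0).1)
    rw [this] at hc
    exact litNeg_ne _ hc

lemma placementMeasure_unsat_le (d k n : ℕ) (hk : 2 ≤ k) {r : ℝ} (hr : 0 ≤ r) :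
    placementMeasure d n {ω | ¬ GeomSatisfiable d k n r ω} ≤
      ENNReal.ofReal (∑ s ∈ Finset.range n,
        (2 * n : ℝ) ^ (s + 1) * (2 * (s + 1) ^ 2) * ((2 * r) ^ d) ^ (s + 2)) := by
  refine (measure_mono (unsat_subset d k n hk r)).trans ?_
  refine (measure_biUnion_finset_le _ _).trans ?_
  rw [ENNReal.ofReal_sum_of_nonneg (fun s _ => by positivity)]
  refine Finset.sum_le_sum fun s _ => ?_
  refine (measure_iUnion_fintype_le _ _).trans ?_
  refine (Finset.sum_le_card_nsmul _ _ _
    fun q _ => placementMeasure_bicycleSet_le d hr _ _ _).trans_eq ?_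
  rw [nsmul_eq_mul, ENNReal.ofReal_mul (by positivity), ← ENNReal.ofReal_pow (by positivity),
    ← ENNReal.ofReal_natCast]
  congr 2
  simp only [Finset.card_univ, Fintype.card_prod, Fintype.card_fun, Fintype.card_fin,
    Fintype.card_bool]
  push_cast
  ring

/-- If the mean degree `c` of a literal is below one, the expected number of bicycles is
`O(1 / n)`. -/
lemma sum_bicycles_le {c : ℝ} (hc0 : 0 ≤ c) (hc1 : c < 1) :
    ∃ C : ℝ, ∀ n : ℕ, 0 < n → ∑ s ∈ Finset.range n,
      (2 * n : ℝ) ^ (s + 1) * (2 * (s + 1) ^ 2) * (c / (2 * n)) ^ (s + 2) ≤ C / n := by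
  have hs : Summable fun s : ℕ => ((s + 1 : ℕ) : ℝ) ^ 2 * c ^ (s + 1) :=
    (summable_nat_add_iff (f := fun s : ℕ => (s : ℝ) ^ 2 * c ^ s) 1).2
      (summable_pow_mul_geometric_of_norm_lt_one 2 (by rwa [Real.norm_of_nonneg hc0]))
  refine ⟨c * ∑' s : ℕ, ((s + 1 : ℕ) : ℝ) ^ 2 * c ^ (s + 1), fun n hn => ?_⟩
  have hn' : (0 : ℝ) < n := by exact_mod_cast hn
  have ht : ∀ s : ℕ, (2 * n : ℝ) ^ (s + 1) * (2 * (s + 1) ^ 2) * (c / (2 * n)) ^ (s + 2) =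
      c * (((s + 1 : ℕ) : ℝ) ^ 2 * c ^ (s + 1)) / n := by
    intro s
    rw [div_pow, pow_succ (2 * (n : ℝ)) (s + 1), pow_succ c (s + 1)]
    push_cast
    field_simp
  rw [Finset.sum_congr rfl fun s _ => ht s, ← Finset.sum_div, ← Finset.mul_sum]
  gcongr
  exact hs.sum_le_tsum _ fun i _ => by positivity

theorem geometric_kSAT_satisfiable_regime (d k : ℕ) (hd : 1 ≤ d) (hk : 2 ≤ k)
    (γ : ℝ) (hγ : 0 < γ) (hγlt : γ < (2:ℝ) ^ (-(1 + 1/(d:ℝ)))) :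
    Tendsto (fun n : ℕ =>
        placementMeasure d n
          {ω | GeomSatisfiable d k n (γ * (n:ℝ) ^ (-(1:ℝ)/(d:ℝ))) ω})
      atTop (nhds 1) := by
  have hd0 : (d : ℝ) ≠ 0 := by positivity
  have hc1 : 2 * (2 * γ) ^ d < 1 := by
    have h : (2 * γ) ^ d < (2:ℝ)⁻¹ := by
      calc (2 * γ) ^ d < (2 * (2:ℝ) ^ (-(1 + 1/(d:ℝ)))) ^ d := by gcongr
        _ = ((2:ℝ) ^ (-(1/(d:ℝ)))) ^ d := by
            congr 1
            rw [show -(1 / (d:ℝ)) = 1 + -(1 + 1 / (d:ℝ)) by ring,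
              Real.rpow_add two_pos, Real.rpow_one]
        _ = (2:ℝ)⁻¹ := by
            rw [← Real.rpow_natCast, ← Real.rpow_mul two_pos.le,
              show -(1 / (d:ℝ)) * d = -1 by field_simp, Real.rpow_neg_one]
    linarith
  obtain ⟨C, hC⟩ := sum_bicycles_le (by positivity) hc1
  have hlim : Tendsto (fun n : ℕ => 1 - ENNReal.ofReal (C / n)) atTop (nhds 1) := by
    have := ENNReal.tendsto_ofReal (tendsto_const_div_atTop_nhds_zero_nat C)
    simpa using ENNReal.Tendsto.sub tendsto_const_nhds this (Or.inl ENNReal.one_ne_top)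
  refine tendsto_of_tendsto_of_tendsto_of_le_of_le' hlim tendsto_const_nhds ?_
    (Eventually.of_forall fun n => prob_le_one)
  filter_upwards [eventually_gt_atTop 0] with n hn
  have hn' : (0 : ℝ) < n := by exact_mod_cast hn
  set r := γ * (n:ℝ) ^ (-(1:ℝ)/(d:ℝ)) with hr
  have hp : (2 * r) ^ d = 2 * (2 * γ) ^ d / (2 * n) := by
    rw [hr, ← mul_assoc, mul_pow, ← Real.rpow_natCast ((n:ℝ) ^ _), ← Real.rpow_mul hn'.le,
      div_mul_cancel₀ _ hd0, Real.rpow_neg_one]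
    field_simp
  have hunsat := placementMeasure_unsat_le d k n hk (r := r) (by positivity)
  rw [hp] at hunsat
  replace hunsat := hunsat.trans (ENNReal.ofReal_le_ofReal (hC n hn))
  rw [tsub_le_iff_right]
  calc (1 : ENNReal) = placementMeasure d n Set.univ := measure_univ.symm
    _ = placementMeasure d n ({ω | GeomSatisfiable d k n r ω} ∪
          {ω | GeomSatisfiable d k n r ω}ᶜ) := by rw [Set.union_compl_self]
    _ ≤ _ := measure_union_le _ _
    _ ≤ _ := by gcongr; exact hunsat
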